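/- Let N ≥ 2, s ∈ (0,1), let B ⊂ ℝ^N be an open ball centered at the origin, and let e ∈ 𝕊^{N−1}. Then for every u ∈ H^s_{B,0}, the polarization P_e u belongs to H^s_{B,0} and ∬_{ℝ^{2N}\(B^c×B^c)} |(P_e u)(x)−(P_e u)(y)|²/|x−y|^{N+2s} dx dy ≤ ∬_{ℝ^{2N}\(B^c×B^c)} |u(x)−u(y)|²/|x−y|^{N+2s} dx dy. -/

import Mathlib

open MeasureTheory Filter Topology Bornology Set
open scoped ENNReal NNReal

noncomputable section

namespace FracNeumann

abbrev Euc (N : ℕ) : Type := EuclideanSpace ℝ (Fin N)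

/-- The kernel weight `|x - y| ^ (N + 2s)`. -/
def kern (N : ℕ) (s : ℝ) (x y : Euc N) : ℝ := ‖x - y‖ ^ ((N : ℝ) + 2 * s)

/-- The region `ℝ^{2N} \ (Ω^c × Ω^c)`, where `Ω^c := ℝ^N \ closure Ω`. -/
def reg (N : ℕ) (Ω : Set (Euc N)) : Set (Euc N × Euc N) :=
  {q | q.1 ∈ closure Ω ∨ q.2 ∈ closure Ω}

/-- The squared seminorm `[u]_{H^s_{Ω,0}}²`, as an extended real number. -/
def semiSq (N : ℕ) (s : ℝ) (Ω : Set (Euc N)) (u : Euc N → ℝ) : ℝ≥0∞ :=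
  ∫⁻ q in reg N Ω, ENNReal.ofReal ((u q.1 - u q.2) ^ 2 / kern N s q.1 q.2)

/-- `∫_Ω u²`, as an extended real number. -/
def l2sq (N : ℕ) (Ω : Set (Euc N)) (u : Euc N → ℝ) : ℝ≥0∞ :=
  ∫⁻ x in Ω, ENNReal.ofReal ((u x) ^ 2)

/-- Membership in `H^s_{Ω,0}`. -/
def memHs (N : ℕ) (s : ℝ) (Ω : Set (Euc N)) (u : Euc N → ℝ) : Prop :=
  Measurable u ∧ l2sq N Ω u < ⊤ ∧ semiSq N s Ω u < ⊤

/-- The squared Gagliardo seminorm `[u]_{H^s(Ω)}²`. -/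
def semiSqOn (N : ℕ) (s : ℝ) (Ω : Set (Euc N)) (u : Euc N → ℝ) : ℝ≥0∞ :=
  ∫⁻ q in Ω ×ˢ Ω, ENNReal.ofReal ((u q.1 - u q.2) ^ 2 / kern N s q.1 q.2)

/-- Membership in `H^s(Ω)` (for functions defined on all of `ℝ^N`). -/
def memHsOn (N : ℕ) (s : ℝ) (Ω : Set (Euc N)) (u : Euc N → ℝ) : Prop :=
  Measurable u ∧ l2sq N Ω u < ⊤ ∧ semiSqOn N s Ω u < ⊤

/-- The normalizing constant `c_{N,s}` of the fractional Laplacian. -/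
def cNs (N : ℕ) (s : ℝ) : ℝ :=
  (4 : ℝ) ^ s * s * Real.Gamma ((N : ℝ) / 2 + s) /
    (Real.pi ^ ((N : ℝ) / 2) * Real.Gamma (1 - s))

/-- The nonlocal Neumann derivative `𝒩_s u`. -/
def Nneu (N : ℕ) (s : ℝ) (Ω : Set (Euc N)) (u : Euc N → ℝ) (x : Euc N) : ℝ :=
  cNs N s * ∫ y in Ω, (u x - u y) / kern N s x y

/-- Membership in `H̃^s_{Ω,0}`: members of `H^s_{Ω,0}` with `𝒩_s u = 0` a.e. in `Ω^c`. -/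
def memHsTilde (N : ℕ) (s : ℝ) (Ω : Set (Euc N)) (u : Euc N → ℝ) : Prop :=
  memHs N s Ω u ∧ ∀ᵐ x ∂(volume.restrict (closure Ω)ᶜ), Nneu N s Ω u x = 0

/-- The first nontrivial Neumann eigenvalue `μ₁^{(s)}(Ω)`. -/
def mu1 (N : ℕ) (s : ℝ) (Ω : Set (Euc N)) : ℝ :=
  sInf {t : ℝ | ∃ u : Euc N → ℝ, memHs N s Ω u ∧ (∫ x in Ω, (u x) ^ 2) = 1 ∧
    (∫ x in Ω, u x) = 0 ∧ t = cNs N s / 2 * (semiSq N s Ω u).toReal}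

/-- The bilinear form (without the constant). -/
def bform (N : ℕ) (s : ℝ) (Ω : Set (Euc N)) (u v : Euc N → ℝ) : ℝ :=
  ∫ q in reg N Ω, (u q.1 - u q.2) * (v q.1 - v q.2) / kern N s q.1 q.2

/-- First nontrivial eigenfunction: weak solution associated to `μ₁^{(s)}(Ω)`. -/
def IsFirstEigen (N : ℕ) (s : ℝ) (Ω : Set (Euc N)) (u : Euc N → ℝ) : Prop :=
  memHs N s Ω u ∧ ¬ (u =ᵐ[volume.restrict Ω] 0) ∧ (∫ x in Ω, u x) = 0 ∧
    ∀ v : Euc N → ℝ, memHs N s Ω v →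
      cNs N s / 2 * bform N s Ω u v = mu1 N s Ω * ∫ x in Ω, u x * v x

/-- Reflection `σ_e(x) = x - 2(x·e)e` across the hyperplane `{x·e = 0}`. -/
def reflect (N : ℕ) (e x : Euc N) : Euc N := x - (2 * (inner ℝ x e : ℝ)) • e

/-- The polarization `P_e u` with respect to the hyperplane `{x·e = 0}`. -/
def polarize (N : ℕ) (e : Euc N) (u : Euc N → ℝ) (x : Euc N) : ℝ :=
  if 0 ≤ (inner ℝ x e : ℝ) then min (u x) (u (reflect N e x))
  else max (u x) (u (reflect N e x))

/-- Foliated Schwarz symmetry with respect to `p`. -/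
def FoliatedSchwarz (N : ℕ) (p : Euc N) (u : Euc N → ℝ) : Prop :=
  ∃ uh : ℝ → ℝ → ℝ, (∀ r : ℝ, AntitoneOn (uh r) (Icc 0 Real.pi)) ∧
    ∀ x : Euc N, x ≠ 0 → u x = uh ‖x‖ (Real.arccos ((inner ℝ x p : ℝ) / ‖x‖))

/-- Radial symmetry (pointwise). -/
def Radial (N : ℕ) (u : Euc N → ℝ) : Prop := ∃ f : ℝ → ℝ, ∀ x, u x = f ‖x‖

/-- Radial symmetry (a.e.). -/
def RadialAE (N : ℕ) (u : Euc N → ℝ) : Prop :=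
  ∃ f : ℝ → ℝ, ∀ᵐ x : Euc N ∂volume, u x = f ‖x‖

/-- The set `{x ∈ Ω : u x ≠ 0}` has exactly two connected components. -/
def TwoNodal (N : ℕ) (Ω : Set (Euc N)) (u : Euc N → ℝ) : Prop :=
  Nat.card (ConnectedComponents {x : Euc N // x ∈ Ω ∧ u x ≠ 0}) = 2

/-- Bounded Lipschitz domain: open, bounded, connected, and near every boundary point the set
is the region above the graph of a Lipschitz function in some direction `e`. -/
def IsLipschitzDomain (N : ℕ) (Ω : Set (Euc N)) : Prop :=
  IsOpen Ω ∧ IsBounded Ω ∧ IsConnected Ω ∧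
    ∀ x ∈ frontier Ω, ∃ e : Euc N, ‖e‖ = 1 ∧ ∃ r : ℝ, 0 < r ∧
      ∃ (L : NNReal) (f : Euc N → ℝ), LipschitzWith L f ∧
        ∀ y ∈ Metric.ball x r,
          (y ∈ Ω ↔ f (y - ((inner ℝ y e : ℝ)) • e) < (inner ℝ y e : ℝ))

/-- `g` is a weak gradient of `u` in `Ω`, square-integrable on `Ω`. -/
def IsWeakGradient (N : ℕ) (Ω : Set (Euc N)) (u : Euc N → ℝ) (g : Euc N → Euc N) : Prop :=
  Measurable g ∧ (∫⁻ x in Ω, ENNReal.ofReal (‖g x‖ ^ 2)) < ⊤ ∧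
    ∀ φ : Euc N → ℝ, ContDiff ℝ (⊤ : ℕ∞) φ → HasCompactSupport φ → tsupport φ ⊆ Ω →
      ∀ i : Fin N, (∫ x in Ω, u x * fderiv ℝ φ x (EuclideanSpace.single i 1)) =
        - ∫ x in Ω, g x i * φ x

/-- Membership in `H¹(Ω)`. -/
def memH1 (N : ℕ) (Ω : Set (Euc N)) (u : Euc N → ℝ) : Prop :=
  Measurable u ∧ l2sq N Ω u < ⊤ ∧ ∃ g, IsWeakGradient N Ω u g

/-- `∫_Ω |∇u|²`, as an extended real number. -/
def gradSq (N : ℕ) (Ω : Set (Euc N)) (u : Euc N → ℝ) : ℝ≥0∞ :=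
  ⨅ (g : Euc N → Euc N) (_ : IsWeakGradient N Ω u g), ∫⁻ x in Ω, ENNReal.ofReal (‖g x‖ ^ 2)

/-- Rayleigh quotient for the fractional Neumann problem. -/
def rayleighS (N : ℕ) (s : ℝ) (Ω : Set (Euc N)) (u : Euc N → ℝ) : ℝ≥0∞ :=
  ENNReal.ofReal (cNs N s / 2) * semiSq N s Ω u / l2sq N Ω u

/-- Rayleigh quotient for the local Neumann problem. -/
def rayleigh1 (N : ℕ) (Ω : Set (Euc N)) (u : Euc N → ℝ) : ℝ≥0∞ :=
  gradSq N Ω u / l2sq N Ω u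

/-- The min-max value `μ_n^{(s)}(Ω)` over `n`-dimensional subspaces of `H^s_{Ω,0} ∩ L²₀(Ω)`. -/
def muNs (N : ℕ) (s : ℝ) (Ω : Set (Euc N)) (n : ℕ) : ℝ≥0∞ :=
  ⨅ (A : Submodule ℝ (Euc N → ℝ)) (_ : Module.finrank ℝ A = n ∧
      (∀ u ∈ A, memHs N s Ω u ∧ (∫ x in Ω, u x) = 0) ∧
      (∀ u ∈ A, u =ᵐ[(volume : Measure (Euc N))] 0 → u = 0)),
    ⨆ (u : Euc N → ℝ) (_ : u ∈ A ∧ u ≠ 0), rayleighS N s Ω u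

/-- The min-max value over `n`-dimensional subspaces of `H̃^s_{Ω,0} ∩ L²₀(Ω)`. -/
def muNsTilde (N : ℕ) (s : ℝ) (Ω : Set (Euc N)) (n : ℕ) : ℝ≥0∞ :=
  ⨅ (A : Submodule ℝ (Euc N → ℝ)) (_ : Module.finrank ℝ A = n ∧
      (∀ u ∈ A, memHsTilde N s Ω u ∧ (∫ x in Ω, u x) = 0) ∧
      (∀ u ∈ A, u =ᵐ[(volume : Measure (Euc N))] 0 → u = 0)),
    ⨆ (u : Euc N → ℝ) (_ : u ∈ A ∧ u ≠ 0), rayleighS N s Ω u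

/-- The min-max value `μ_n^{(1)}(Ω)` over `n`-dimensional subspaces of `H¹(Ω) ∩ L²₀(Ω)`. -/
def muN1 (N : ℕ) (Ω : Set (Euc N)) (n : ℕ) : ℝ≥0∞ :=
  ⨅ (A : Submodule ℝ (Euc N → ℝ)) (_ : Module.finrank ℝ A = n ∧
      (∀ u ∈ A, memH1 N Ω u ∧ (∫ x in Ω, u x) = 0) ∧
      (∀ u ∈ A, u =ᵐ[volume.restrict Ω] 0 → u = 0)),
    ⨆ (u : Euc N → ℝ) (_ : u ∈ A ∧ u ≠ 0), rayleigh1 N Ω u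

/-- `μ_n^{(s)}(Ω)` including `μ₀^{(s)}(Ω) := 0`. -/
def muNsFull (N : ℕ) (s : ℝ) (Ω : Set (Euc N)) (n : ℕ) : ℝ≥0∞ :=
  if n = 0 then 0 else muNs N s Ω n

/-- `μ_n^{(1)}(Ω)` including `μ₀^{(1)}(Ω) := 0`. -/
def muN1Full (N : ℕ) (Ω : Set (Euc N)) (n : ℕ) : ℝ≥0∞ :=
  if n = 0 then 0 else muN1 N Ω n

/-- The squared `H^s_{Ω,0}`-seminorm of the `s`-minimal extension of `u`:
the minimal value of `[v]²` over `v ∈ H^s_{Ω,0}` with `v = u` a.e. in `Ω`. -/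
def minExtSemiSq (N : ℕ) (s : ℝ) (Ω : Set (Euc N)) (u : Euc N → ℝ) : ℝ≥0∞ :=
  ⨅ (v : Euc N → ℝ) (_ : memHs N s Ω v ∧ v =ᵐ[volume.restrict Ω] u), semiSq N s Ω v

/-- `ω_{N-1}`: volume of the unit ball of `ℝ^{N-1}`. -/
def omegaPrev (N : ℕ) : ℝ := (volume (Metric.ball (0 : Euc (N - 1)) 1)).toReal

/-- Membership in `L²₀(Ω)`. -/
def memL20 (N : ℕ) (Ω : Set (Euc N)) (u : Euc N → ℝ) : Prop :=
  Measurable u ∧ l2sq N Ω u < ⊤ ∧ (∫ x in Ω, u x) = 0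

/-- The functional `F_s` (value `+∞` outside `H^s(Ω)`). -/
def Fs (N : ℕ) (s : ℝ) (Ω : Set (Euc N)) (u : Euc N → ℝ) : ℝ≥0∞ :=
  ENNReal.ofReal (1 - s) * minExtSemiSq N s Ω u

/-- The functional `F₁` (value `+∞` outside `H¹(Ω)`). -/
def F1 (N : ℕ) (Ω : Set (Euc N)) (u : Euc N → ℝ) : ℝ≥0∞ :=
  ENNReal.ofReal (omegaPrev N / (2 * N)) * gradSq N Ω u

end FracNeumann

/-!
The reflection `σ = σ_e` preserves Lebesgue measure and the region of integration, so the squared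
seminorm is a quarter of the integral of the density summed over the four points `(x, y)`,
`(σ x, y)`, `(x, σ y)`, `(σ x, σ y)`. That sum may be compared pointwise, with `x` and `y` on the side
`z · e ≥ 0`. Polarization keeps the sum of the four squared differences fixed and decreases the
part coming from the two pairs on matching sides; these pairs have the larger weight, because
`|x - y| ≤ |x - σ y|`.
-/

namespace FracNeumann

section OrbitSum

variable {α M : Type*} {σ : α → α}

/-- The sum of `F` over the orbit of `q` under the action of `σ` on each coordinate separately;
for an involution `σ` these are four points, counted with multiplicity. -/
def orbitSum [Add M] (σ : α → α) (F : α × α → M) (q : α × α) : M :=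
  F q + F (σ q.1, q.2) + F (q.1, σ q.2) + F (σ q.1, σ q.2)

lemma orbitSum_map_left [AddCommMonoid M] (hσ : Function.Involutive σ) (F : α × α → M) (x y : α) :
    orbitSum σ F (σ x, y) = orbitSum σ F (x, y) := by
  simp only [orbitSum, hσ x]
  abel

lemma orbitSum_map_right [AddCommMonoid M] (hσ : Function.Involutive σ) (F : α × α → M) (x y : α) :
    orbitSum σ F (x, σ y) = orbitSum σ F (x, y) := by
  simp only [orbitSum, hσ y]
  abel

lemma orbitSum_ofReal (σ : α → α) {F : α × α → ℝ} (hF : 0 ≤ F) (q : α × α) :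
    orbitSum σ (fun p ↦ ENNReal.ofReal (F p)) q = ENNReal.ofReal (orbitSum σ F q) := by
  have h (p : α × α) : 0 ≤ F p := hF p
  rw [orbitSum, orbitSum, ENNReal.ofReal_add (add_nonneg (add_nonneg (h _) (h _)) (h _)) (h _),
    ENNReal.ofReal_add (add_nonneg (h _) (h _)) (h _), ENNReal.ofReal_add (h _) (h _)]

variable [MeasurableSpace α] {μ : Measure α}

lemma setLIntegral_comp_of_preimage_eq (hσ : MeasurePreserving σ μ μ) {S : Set α}
    (hS : MeasurableSet S) (hσS : σ ⁻¹' S = S) {F : α → ℝ≥0∞} (hF : Measurable F) :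
    ∫⁻ x in S, F (σ x) ∂μ = ∫⁻ x in S, F x ∂μ := by
  conv_lhs => rw [← hσS]
  exact hσ.setLIntegral_comp_preimage hS hF

lemma setLIntegral_orbitSum [SFinite μ] (hσ : MeasurePreserving σ μ μ) {S : Set (α × α)}
    (hS : MeasurableSet S) (hleft : Prod.map σ id ⁻¹' S = S) (hright : Prod.map id σ ⁻¹' S = S)
    {F : α × α → ℝ≥0∞} (hF : Measurable F) :
    ∫⁻ q in S, orbitSum σ F q ∂(μ.prod μ) = 4 * ∫⁻ q in S, F q ∂(μ.prod μ) := by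
  have hσm := hσ.measurable
  have hboth : Prod.map σ σ ⁻¹' S = S :=
    calc Prod.map σ σ ⁻¹' S = Prod.map σ id ⁻¹' (Prod.map id σ ⁻¹' S) := rfl
      _ = S := by rw [hright, hleft]
  have left := setLIntegral_comp_of_preimage_eq (hσ.prod (.id μ)) hS hleft hF
  have right := setLIntegral_comp_of_preimage_eq ((MeasurePreserving.id μ).prod hσ) hS hright hF
  have both := setLIntegral_comp_of_preimage_eq (hσ.prod hσ) hS hboth hF
  simp only [Prod.map, id] at left right both
  simp only [orbitSum]
  rw [lintegral_add_right _ (by fun_prop), lintegral_add_right _ (by fun_prop),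
    lintegral_add_right _ (by fun_prop), left, right, both]
  ring

end OrbitSum

section FourPoint

lemma sq_sub_min_add_sq_sub_max_le (a b c d : ℝ) :
    (min a b - min c d) ^ 2 + (max a b - max c d) ^ 2 ≤ (a - c) ^ 2 + (b - d) ^ 2 := by
  rcases le_total a b with hab | hab <;> rcases le_total c d with hcd | hcd <;>
    simp only [hab, hcd, min_eq_left, min_eq_right, max_eq_left, max_eq_right] <;>
    nlinarith [mul_nonneg (sub_nonneg.2 hab) (sub_nonneg.2 hcd)]

lemma sum_sq_sub_min_max (a b c d : ℝ) :
    (min a b - min c d) ^ 2 + (max a b - max c d) ^ 2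
        + ((max a b - min c d) ^ 2 + (min a b - max c d) ^ 2)
      = (a - c) ^ 2 + (b - d) ^ 2 + ((b - c) ^ 2 + (a - d) ^ 2) := by
  rcases le_total a b with hab | hab <;> rcases le_total c d with hcd | hcd <;>
    simp only [hab, hcd, min_eq_left, min_eq_right, max_eq_left, max_eq_right] <;>
    ring

lemma weighted_sum_sq_sub_min_max_le (a b c d : ℝ) {v w : ℝ} (hvw : v ≤ w) :
    w * ((min a b - min c d) ^ 2 + (max a b - max c d) ^ 2)
        + v * ((max a b - min c d) ^ 2 + (min a b - max c d) ^ 2)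
      ≤ w * ((a - c) ^ 2 + (b - d) ^ 2) + v * ((b - c) ^ 2 + (a - d) ^ 2) := by
  have hmatching := mul_le_mul_of_nonneg_left (sq_sub_min_add_sq_sub_max_le a b c d)
    (sub_nonneg.2 hvw)
  have htotal := congrArg (v * ·) (sum_sq_sub_min_max a b c d)
  linarith

end FourPoint

variable {N : ℕ} {s : ℝ} {e : Euc N}

section Reflection

lemma reflect_eq_reflection (he : ‖e‖ = 1) : reflect N e = (ℝ ∙ e)ᗮ.reflection := by
  ext1 x
  rw [Submodule.reflection_orthogonal_apply, Submodule.reflection_singleton_apply, he, reflect,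
    real_inner_comm]
  simp [two_smul, two_mul, add_smul]

lemma involutive_reflect (he : ‖e‖ = 1) : Function.Involutive (reflect N e) := by
  rw [reflect_eq_reflection he]
  exact Submodule.reflection_involutive _

lemma norm_reflect (he : ‖e‖ = 1) (x : Euc N) : ‖reflect N e x‖ = ‖x‖ := by
  rw [reflect_eq_reflection he]
  exact LinearIsometryEquiv.norm_map _ x

lemma norm_reflect_sub_reflect (he : ‖e‖ = 1) (x y : Euc N) :
    ‖reflect N e x - reflect N e y‖ = ‖x - y‖ := by
  rw [reflect_eq_reflection he, ← map_sub, LinearIsometryEquiv.norm_map]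

lemma inner_reflect (he : ‖e‖ = 1) (x : Euc N) :
    inner ℝ (reflect N e x) e = -inner ℝ x e := by
  rw [reflect, inner_sub_left, real_inner_smul_left, real_inner_self_eq_norm_sq, he]
  ring

lemma measurePreserving_reflect (he : ‖e‖ = 1) : MeasurePreserving (reflect N e) := by
  rw [reflect_eq_reflection he]
  exact LinearIsometryEquiv.measurePreserving _

lemma measurableEmbedding_reflect (he : ‖e‖ = 1) : MeasurableEmbedding (reflect N e) := by
  rw [reflect_eq_reflection he]
  exact (ℝ ∙ e)ᗮ.reflection.toHomeomorph.measurableEmbedding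

lemma preimage_reflect_closure (he : ‖e‖ = 1) (Ω : Set (Euc N)) :
    reflect N e ⁻¹' closure Ω = closure (reflect N e ⁻¹' Ω) := by
  rw [reflect_eq_reflection he]
  exact (ℝ ∙ e)ᗮ.reflection.toHomeomorph.preimage_closure Ω

lemma preimage_reflect_ball (he : ‖e‖ = 1) (R : ℝ) :
    reflect N e ⁻¹' Metric.ball 0 R = Metric.ball 0 R := by
  ext x
  simp only [mem_preimage, mem_ball_zero_iff, norm_reflect he]

lemma norm_sub_le_norm_sub_reflect (he : ‖e‖ = 1) {x y : Euc N}
    (hx : 0 ≤ inner ℝ x e) (hy : 0 ≤ inner ℝ y e) : ‖x - y‖ ≤ ‖x - reflect N e y‖ := by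
  have hsq : ‖x - reflect N e y‖ ^ 2 = ‖x - y‖ ^ 2 + 4 * (inner ℝ x e * inner ℝ y e) := by
    have hsub : x - reflect N e y = (x - y) + (2 * inner ℝ y e) • e := by
      rw [reflect]
      abel
    rw [hsub, norm_add_sq_real, inner_smul_right, inner_sub_left, norm_smul, he, mul_one,
      Real.norm_eq_abs, sq_abs]
    ring
  refine le_of_sq_le_sq ?_ (norm_nonneg _)
  rw [hsq]
  linarith [mul_nonneg hx hy]

end Reflection

section Polarization

lemma polarize_of_nonneg (u : Euc N → ℝ) {x : Euc N} (hx : 0 ≤ inner ℝ x e) :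
    polarize N e u x = min (u x) (u (reflect N e x)) :=
  if_pos hx

lemma polarize_reflect_of_nonneg (he : ‖e‖ = 1) (u : Euc N → ℝ) {x : Euc N}
    (hx : 0 ≤ inner ℝ x e) :
    polarize N e u (reflect N e x) = max (u x) (u (reflect N e x)) := by
  rcases hx.eq_or_lt with hx₀ | hx₀
  · have hfix : reflect N e x = x := by simp [reflect, ← hx₀]
    rw [hfix, polarize_of_nonneg u hx, hfix, min_self, max_self]
  · have hneg : ¬ 0 ≤ inner ℝ (reflect N e x) e := by
      rw [inner_reflect he]
      linarith
    rw [polarize, if_neg hneg, involutive_reflect he, max_comm]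

lemma measurable_polarize (he : ‖e‖ = 1) {u : Euc N → ℝ} (hu : Measurable u) :
    Measurable (polarize N e u) := by
  have huσ := hu.comp (measurePreserving_reflect he).measurable
  exact .ite (measurableSet_le measurable_const (by fun_prop)) (hu.min huσ) (hu.max huσ)

lemma polarize_add_polarize_reflect {M : Type*} [AddCommMagma M] (he : ‖e‖ = 1) (f : ℝ → M)
    (u : Euc N → ℝ) (x : Euc N) :
    f (polarize N e u x) + f (polarize N e u (reflect N e x)) =
      f (u x) + f (u (reflect N e x)) := by
  wlog hx : 0 ≤ inner ℝ x e generalizing x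
  · have hσx : 0 ≤ inner ℝ (reflect N e x) e := by
      rw [inner_reflect he]
      linarith
    simpa only [involutive_reflect he x, add_comm] using this _ hσx
  rw [polarize_of_nonneg u hx, polarize_reflect_of_nonneg he u hx]
  rcases le_total (u x) (u (reflect N e x)) with h | h
  · rw [min_eq_left h, max_eq_right h]
  · rw [min_eq_right h, max_eq_left h, add_comm]

lemma two_mul_l2sq (he : ‖e‖ = 1) {Ω : Set (Euc N)} (hΩ : reflect N e ⁻¹' Ω = Ω)
    {u : Euc N → ℝ} (hu : Measurable u) :
    2 * l2sq N Ω u =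
      ∫⁻ x in Ω, (ENNReal.ofReal (u x ^ 2) + ENNReal.ofReal (u (reflect N e x) ^ 2)) := by
  have hcomp : ∫⁻ x in Ω, ENNReal.ofReal (u (reflect N e x) ^ 2) = l2sq N Ω u := by
    conv_lhs => rw [← hΩ]
    exact (measurePreserving_reflect he).setLIntegral_comp_preimage_emb
      (measurableEmbedding_reflect he) (fun x ↦ ENNReal.ofReal (u x ^ 2)) Ω
  rw [lintegral_add_left (by fun_prop), hcomp, ← l2sq, two_mul]

lemma l2sq_polarize (he : ‖e‖ = 1) {Ω : Set (Euc N)} (hΩ : reflect N e ⁻¹' Ω = Ω)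
    {u : Euc N → ℝ} (hu : Measurable u) : l2sq N Ω (polarize N e u) = l2sq N Ω u := by
  have h : 2 * l2sq N Ω (polarize N e u) = 2 * l2sq N Ω u := by
    rw [two_mul_l2sq he hΩ hu, two_mul_l2sq he hΩ (measurable_polarize he hu)]
    exact lintegral_congr fun x ↦
      polarize_add_polarize_reflect he (fun t ↦ ENNReal.ofReal (t ^ 2)) u x
  exact (ENNReal.mul_right_inj two_ne_zero ENNReal.ofNat_ne_top).1 h

end Polarization

section Kernel

lemma kern_nonneg (s : ℝ) (x y : Euc N) : 0 ≤ kern N s x y :=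
  Real.rpow_nonneg (norm_nonneg _) _

lemma kern_pos (s : ℝ) {x y : Euc N} (hxy : x ≠ y) : 0 < kern N s x y :=
  Real.rpow_pos_of_pos (norm_sub_pos_iff.2 hxy) _

lemma kern_reflect_reflect (he : ‖e‖ = 1) (s : ℝ) (x y : Euc N) :
    kern N s (reflect N e x) (reflect N e y) = kern N s x y := by
  rw [kern, kern, norm_reflect_sub_reflect he]

lemma kern_reflect_left (he : ‖e‖ = 1) (s : ℝ) (x y : Euc N) :
    kern N s (reflect N e x) y = kern N s x (reflect N e y) := by
  rw [← kern_reflect_reflect he, involutive_reflect he]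

lemma kern_le_kern_reflect_right (hs : 0 ≤ (N : ℝ) + 2 * s) (he : ‖e‖ = 1) {x y : Euc N}
    (hx : 0 ≤ inner ℝ x e) (hy : 0 ≤ inner ℝ y e) :
    kern N s x y ≤ kern N s x (reflect N e y) :=
  Real.rpow_le_rpow (norm_nonneg _) (norm_sub_le_norm_sub_reflect he hx hy) hs

end Kernel

section Seminorm

/-- The density `|u(x) - u(y)|² / |x - y|^{N+2s}` of the squared seminorm, as a function of the
pair `(x, y)`. It vanishes on the diagonal. -/
def gagliardoDensity (N : ℕ) (s : ℝ) (u : Euc N → ℝ) (q : Euc N × Euc N) : ℝ :=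
  (u q.1 - u q.2) ^ 2 / kern N s q.1 q.2

lemma gagliardoDensity_nonneg (s : ℝ) (u : Euc N → ℝ) : 0 ≤ gagliardoDensity N s u :=
  fun q ↦ div_nonneg (sq_nonneg _) (kern_nonneg s q.1 q.2)

lemma measurable_gagliardoDensity (s : ℝ) {u : Euc N → ℝ} (hu : Measurable u) :
    Measurable (gagliardoDensity N s u) := by
  unfold gagliardoDensity kern
  fun_prop

lemma measurableSet_reg (Ω : Set (Euc N)) : MeasurableSet (reg N Ω) :=
  (measurableSet_closure.preimage measurable_fst).union
    (measurableSet_closure.preimage measurable_snd)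

lemma four_mul_semiSq (he : ‖e‖ = 1) {Ω : Set (Euc N)} (hΩ : reflect N e ⁻¹' Ω = Ω) (s : ℝ)
    {u : Euc N → ℝ} (hu : Measurable u) :
    4 * semiSq N s Ω u =
      ∫⁻ q in reg N Ω, ENNReal.ofReal (orbitSum (reflect N e) (gagliardoDensity N s u) q) := by
  have hcl (x : Euc N) : reflect N e x ∈ closure Ω ↔ x ∈ closure Ω := by
    rw [← mem_preimage, preimage_reflect_closure he, hΩ]
  simp only [← orbitSum_ofReal _ (gagliardoDensity_nonneg s u)]
  refine (setLIntegral_orbitSum (measurePreserving_reflect he) (measurableSet_reg Ω) ?_ ?_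
    (measurable_gagliardoDensity s hu).ennreal_ofReal).symm
  all_goals
    ext q
    simp [reg, hcl]

lemma orbitSum_gagliardoDensity (he : ‖e‖ = 1) (s : ℝ) (u : Euc N → ℝ) (x y : Euc N) :
    orbitSum (reflect N e) (gagliardoDensity N s u) (x, y) =
      (kern N s x y)⁻¹ * ((u x - u y) ^ 2 + (u (reflect N e x) - u (reflect N e y)) ^ 2)
        + (kern N s x (reflect N e y))⁻¹
          * ((u (reflect N e x) - u y) ^ 2 + (u x - u (reflect N e y)) ^ 2) := by
  simp only [orbitSum, gagliardoDensity, kern_reflect_reflect he, kern_reflect_left he]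
  ring

lemma orbitSum_gagliardoDensity_polarize_le_of_nonneg (hs : 0 ≤ (N : ℝ) + 2 * s) (he : ‖e‖ = 1)
    (u : Euc N → ℝ) {x y : Euc N} (hx : 0 ≤ inner ℝ x e) (hy : 0 ≤ inner ℝ y e) :
    orbitSum (reflect N e) (gagliardoDensity N s (polarize N e u)) (x, y) ≤
      orbitSum (reflect N e) (gagliardoDensity N s u) (x, y) := by
  simp only [orbitSum_gagliardoDensity he, polarize_of_nonneg u hx, polarize_of_nonneg u hy,
    polarize_reflect_of_nonneg he u hx, polarize_reflect_of_nonneg he u hy]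
  rcases eq_or_ne x y with rfl | hxy
  · -- Here `(kern N s x x)⁻¹` may be `0⁻¹ = 0`, but it multiplies a vanishing sum.
    have htotal := sum_sq_sub_min_max (u x) (u (reflect N e x)) (u x) (u (reflect N e x))
    simp only [sub_self, ne_eq, OfNat.ofNat_ne_zero, not_false_eq_true, zero_pow, add_zero,
      zero_add, mul_zero] at htotal ⊢
    rw [htotal]
  · exact weighted_sum_sq_sub_min_max_le _ _ _ _
      (inv_anti₀ (kern_pos s hxy) (kern_le_kern_reflect_right hs he hx hy))

lemma orbitSum_gagliardoDensity_polarize_le (hs : 0 ≤ (N : ℝ) + 2 * s) (he : ‖e‖ = 1)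
    (u : Euc N → ℝ) (x y : Euc N) :
    orbitSum (reflect N e) (gagliardoDensity N s (polarize N e u)) (x, y) ≤
      orbitSum (reflect N e) (gagliardoDensity N s u) (x, y) := by
  have hσ := involutive_reflect he
  have hside {z : Euc N} (hz : ¬ 0 ≤ inner ℝ z e) : 0 ≤ inner ℝ (reflect N e z) e := by
    rw [inner_reflect he]
    linarith
  wlog hx : 0 ≤ inner ℝ x e generalizing x
  · simpa only [orbitSum_map_left hσ] using this _ (hside hx)
  wlog hy : 0 ≤ inner ℝ y e generalizing y
  · simpa only [orbitSum_map_right hσ] using this _ (hside hy)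
  exact orbitSum_gagliardoDensity_polarize_le_of_nonneg hs he u hx hy

theorem semiSq_polarize_le (hs : 0 ≤ (N : ℝ) + 2 * s) (he : ‖e‖ = 1) {Ω : Set (Euc N)}
    (hΩ : reflect N e ⁻¹' Ω = Ω) {u : Euc N → ℝ} (hu : Measurable u) :
    semiSq N s Ω (polarize N e u) ≤ semiSq N s Ω u := by
  have h : 4 * semiSq N s Ω (polarize N e u) ≤ 4 * semiSq N s Ω u := by
    rw [four_mul_semiSq he hΩ s hu, four_mul_semiSq he hΩ s (measurable_polarize he hu)]
    exact lintegral_mono fun q ↦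
      ENNReal.ofReal_le_ofReal (orbitSum_gagliardoDensity_polarize_le hs he u q.1 q.2)
  exact (ENNReal.mul_le_mul_iff_right four_ne_zero ENNReal.ofNat_ne_top).1 h

end Seminorm

theorem statement13_general (N : ℕ) (s : ℝ) (hs : 0 ≤ (N : ℝ) + 2 * s) (Ω : Set (Euc N))
    (e : Euc N) (he : ‖e‖ = 1) (hΩ : reflect N e ⁻¹' Ω = Ω)
    (u : Euc N → ℝ) (hu : memHs N s Ω u) :
    memHs N s Ω (polarize N e u) ∧
      semiSq N s Ω (polarize N e u) ≤ semiSq N s Ω u := by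
  obtain ⟨hmeas, hl2, hsemi⟩ := hu
  have hle := semiSq_polarize_le hs he hΩ hmeas
  exact ⟨⟨measurable_polarize he hmeas, (l2sq_polarize he hΩ hmeas).trans_lt hl2,
    hle.trans_lt hsemi⟩, hle⟩

/-- Proposition 4.3, inequality part: polarization does not increase the
`H^s_{B,0}`-seminorm. -/
theorem statement13 (N : ℕ) (hN : 2 ≤ N) (s : ℝ) (hs : s ∈ Set.Ioo (0 : ℝ) 1)
    (R : ℝ) (hR : 0 < R) (B : Set (Euc N)) (hB : B = Metric.ball (0 : Euc N) R)
    (e : Euc N) (he : ‖e‖ = 1)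
    (u : Euc N → ℝ) (hu : memHs N s B u) :
    memHs N s B (polarize N e u) ∧
      semiSq N s B (polarize N e u) ≤ semiSq N s B u := by
  subst hB
  have hNs : 0 ≤ (N : ℝ) + 2 * s := by linarith [hs.1, N.cast_nonneg (α := ℝ)]
  exact statement13_general N s hNs _ e he (preimage_reflect_ball he R) u hu

end FracNeumann
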